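/- Suppose the N agents evolve on [0,T) according to ẋ_i(t) = g(x_i(t)) − Σ_{j∈N_i} r(‖x_i(t)−x_j(t)‖)(x_i(t)−x_j(t)) + v_i(t), where r satisfies Property (P), c > 1, each free input satisfies ‖v_i(t)‖ ≤ δ for all t, the constant δ > 0 satisfies δ ≤ (1/K)·r(0)²·s/r(s) for every s ≥ R̃, the constants 0 < R̃ < R satisfy M·P(R̃) ≤ P(R), initially x_i(0) ∈ D_ε for every i, and ‖x_i(0)−x_j(0)‖ ≤ R̃ for every edge {i,j} ∈ E. Then for every t ∈ [0,T): (a) ‖x_i(t)−x_j(t)‖ ≤ R for every edge {i,j} ∈ E, and (b) ‖x_i(t)‖ < 𝔯 for every i; in fact ‖x_i(t)‖ ≤ 𝔯 − ((c̃−1)/c̃)ε where c̃ > 1 is determined by h(1/c̃) = 1/c. -/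

import Mathlib

open scoped BigOperators
open Matrix

/-- Induced Euclidean (spectral) norm of a real matrix. -/
noncomputable def opNorm {m k : ℕ} (A : Matrix (Fin m) (Fin k) ℝ) : ℝ :=
  ‖LinearMap.toContinuousLinearMap (Matrix.toEuclideanLin A)‖

/-- The second-smallest eigenvalue (counted with multiplicity) of a real symmetric matrix. -/
noncomputable def lambda2 {N : ℕ} (A : Matrix (Fin N) (Fin N) ℝ) : ℝ :=
  if h : A.IsHermitian then (List.insertionSort (· ≤ ·) (List.ofFn h.eigenvalues)).getD 1 0 else 0

/-- Oriented incidence matrix determined by tail/head maps `tl hd : Fin M → Fin N`: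
column `l` has `+1` at the head `hd l` and `-1` at the tail `tl l`. -/
def incMat {N M : ℕ} (tl hd : Fin M → Fin N) : Matrix (Fin N) (Fin M) ℝ :=
  Matrix.of fun k l => if k = hd l then 1 else if k = tl l then -1 else 0

/-- `K = 2 √(N(N-1)) |D(G)ᵀ| / λ₂(G)²`. -/
noncomputable def Kconst {N M : ℕ} (tl hd : Fin M → Fin N) : ℝ :=
  2 * Real.sqrt ((N : ℝ) * ((N : ℝ) - 1)) * opNorm (incMat tl hd)ᵀ /
    (lambda2 (incMat tl hd * (incMat tl hd)ᵀ)) ^ 2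

/-- `P(ρ) = ∫₀^ρ r(s) s ds`. -/
noncomputable def Pfun (r : ℝ → ℝ) (ρ : ℝ) : ℝ := ∫ s in (0:ℝ)..ρ, r s * s

/-- The repulsive vector field: `g(x) = -cδ h((ε+‖x‖-𝔯)/ε) x/‖x‖` on
`N_ε = {𝔯-ε ≤ ‖x‖ < 𝔯}` and `g(x) = 0` on `D_ε = {‖x‖ < 𝔯-ε}`. -/
noncomputable def gfun {n : ℕ} (c δ ε 𝔯 : ℝ) (h : ℝ → ℝ)
    (x : EuclideanSpace ℝ (Fin n)) : EuclideanSpace ℝ (Fin n) :=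
  if 𝔯 - ε ≤ ‖x‖ then (-(c * δ * h ((ε + ‖x‖ - 𝔯) / ε) / ‖x‖)) • x else 0

/-!
Two barrier arguments prove the theorem.

*Invariance of the ball.* Consider the first time at which some agent reaches a radius `ρ`
strictly between the critical radius `𝔯 - ((ct - 1) / ct) ε` and `𝔯`. All the other agents then
lie in the closed ball of radius `ρ`, so the coupling pulls the agent inwards, while the repulsion,
of size `c δ h(…) > δ` (`inner_gfun_lt`), beats the input: the squared norm decreases strictly,
which is impossible at a first hitting time (`lt_of_deriv_neg_at_level`).

*Connectivity.* The total potential `V = ∑ P(‖x_i - x_j‖)` over the edges starts at or below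
`M P(R')`. Along the dynamics its derivative has three parts. The repulsion contributes a
nonpositive term, since `-g` is a monotone operator on the ball (`gfun_dissipative`). The
coupling contributes `-∑ ‖ξ_i‖²`, where `ξ` is the weighted Laplacian applied to `x`
(`sum_inner_laplacian`). As long as `V > M P(R')`, some edge has length at least `R'`, and then
the choice of `δ` makes `∑ ‖ξ_i‖²` dominate the input term (`input_power_le`). That estimate rests
on `λ₂ ∑ ‖y_i‖² ≤ ∑ ‖y_i - y_j‖² ≤ |Dᵀ|² ∑ ‖y_i‖²` for `y` of zero mean (`lambda2_mul_le`,
`sum_edge_sq_le`). Positivity of `λ₂` comes from the bound on `δ` itself: with `x / 0 = 0`, the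
constant `1 / K` would vanish for `λ₂ = 0`, contradicting `δ > 0`. Hence `V ≤ M P(R') ≤ P(R)`
forever (`le_of_deriv_nonpos_above`), and each edge length is at most `R` because `P` is strictly
increasing.
-/

/-! ### Spectral bounds -/

theorem incMat_transpose_mulVec {N M : ℕ} (tl hd : Fin M → Fin N) (hne : ∀ l, tl l ≠ hd l)
    (a : Fin N → ℝ) (l : Fin M) : ((incMat tl hd)ᵀ *ᵥ a) l = a (hd l) - a (tl l) := by
  have key : ∀ k, (incMat tl hd)ᵀ l k * a k
      = (if k = hd l then a k else 0) - (if k = tl l then a k else 0) := by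
    intro k
    simp only [incMat, Matrix.transpose_apply, Matrix.of_apply]
    by_cases h1 : k = hd l
    · have : k ≠ tl l := fun h => hne l (h.symm.trans h1)
      simp [h1, (hne l).symm]
    · by_cases h2 : k = tl l <;> simp [h1, h2, hne l]
  simp only [Matrix.mulVec, dotProduct]
  rw [Finset.sum_congr rfl fun k _ => key k, Finset.sum_sub_distrib]
  simp

theorem sum_edge_sq_le_scalar {N M : ℕ} (tl hd : Fin M → Fin N) (hne : ∀ l, tl l ≠ hd l)
    (a : Fin N → ℝ) :
    ∑ l, (a (hd l) - a (tl l)) ^ 2 ≤ opNorm (incMat tl hd)ᵀ ^ 2 * ∑ i, a i ^ 2 := by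
  have h := (LinearMap.toContinuousLinearMap
    (Matrix.toEuclideanLin (incMat tl hd)ᵀ)).le_opNorm (WithLp.toLp 2 a)
  have h2 := pow_le_pow_left₀ (norm_nonneg _) h 2
  rw [mul_pow, EuclideanSpace.norm_sq_eq, EuclideanSpace.norm_sq_eq] at h2
  simpa [Matrix.toEuclideanLin, Matrix.toLpLin_apply, incMat_transpose_mulVec tl hd hne, opNorm] using h2

/-- All eigenvalues except possibly one are at least the second entry of their sorted list. -/
theorem lambda2_le_eigenvalues {N : ℕ} (hN : 2 ≤ N) (A : Matrix (Fin N) (Fin N) ℝ)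
    (hA : A.IsHermitian) :
    (∃ j, lambda2 A = hA.eigenvalues j) ∧
      ∃ i₀, ∀ i, i ≠ i₀ → lambda2 A ≤ hA.eigenvalues i := by
  set s := List.insertionSort (· ≤ ·) (List.ofFn hA.eigenvalues) with hs
  have hperm : s.Perm (List.ofFn hA.eigenvalues) := List.perm_insertionSort _ _
  have hsort : s.Pairwise (· ≤ ·) := List.pairwise_insertionSort _ _
  have hlam : lambda2 A = s.getD 1 0 := by
    rw [lambda2, dif_pos hA]
  have hlen : s.length = N := by rw [hperm.length_eq]; simp
  match hs' : s, hlen with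
  | [], hl => simp at hl; omega
  | [_], hl => simp at hl; omega
  | a :: b :: rest, _ =>
    have hlamb : lambda2 A = b := by simpa using hlam
    rw [hlamb]
    have hmem : ∀ y, y ∈ a :: b :: rest → ∃ j, hA.eigenvalues j = y := by
      intro y hy
      have := hperm.mem_iff.1 hy
      simpa [List.mem_ofFn] using this
    refine ⟨?_, ?_⟩
    · obtain ⟨j, hj⟩ := hmem b (by simp)
      exact ⟨j, hj.symm⟩
    · obtain ⟨i₀, hi₀⟩ := hmem a (by simp)
      refine ⟨i₀, fun i hi => ?_⟩
      have hm : Multiset.map hA.eigenvalues (Finset.univ : Finset (Fin N)).val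
          = a ::ₘ ((b :: rest : List ℝ) : Multiset ℝ) := by
        rw [Multiset.cons_coe, Multiset.coe_eq_coe.2 hperm]
        simp [Fin.univ_val_map]
      have hu : (Finset.univ : Finset (Fin N)).val
          = i₀ ::ₘ (Finset.univ.erase i₀ : Finset (Fin N)).val := by
        rw [Finset.erase_val, Multiset.cons_erase (Finset.mem_univ_val i₀)]
      rw [hu, Multiset.map_cons, hi₀, Multiset.cons_inj_right] at hm
      have hmi : hA.eigenvalues i ∈ ((b :: rest : List ℝ) : Multiset ℝ) := by
        rw [← hm]
        exact Multiset.mem_map_of_mem _ (by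
          change i ∈ (Finset.univ.erase i₀ : Finset (Fin N)); simp [hi])
      have hsort2 := (List.pairwise_cons.1 hsort).2
      rcases List.mem_cons.1 (Multiset.mem_coe.1 hmi) with h | h
      · exact h.ge
      · exact (List.pairwise_cons.1 hsort2).1 _ h

theorem incMat_posSemidef {N M : ℕ} (tl hd : Fin M → Fin N) :
    (incMat tl hd * (incMat tl hd)ᵀ).PosSemidef := by
  have := Matrix.posSemidef_self_mul_conjTranspose (incMat tl hd)
  rwa [Matrix.conjTranspose_eq_transpose_of_trivial] at this

theorem lambda2_nonneg {N M : ℕ} (hN : 2 ≤ N) (tl hd : Fin M → Fin N) :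
    0 ≤ lambda2 (incMat tl hd * (incMat tl hd)ᵀ) := by
  have hps := incMat_posSemidef tl hd
  obtain ⟨⟨j, hj⟩, -⟩ := lambda2_le_eigenvalues hN _ hps.isHermitian
  rw [hj]
  exact hps.eigenvalues_nonneg j

/-- The Courant–Fischer bound on the orthogonal complement of the constant vectors. When
`λ₂ > 0` the constant vector, lying in the kernel, is orthogonal to all eigenvectors but one,
hence is proportional to the remaining one. -/
theorem lambda2_mul_le_scalar {N M : ℕ} (hN : 2 ≤ N) (tl hd : Fin M → Fin N)
    (hne : ∀ l, tl l ≠ hd l) (hpos : 0 < lambda2 (incMat tl hd * (incMat tl hd)ᵀ))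
    (a : Fin N → ℝ) (ha : ∑ i, a i = 0) :
    lambda2 (incMat tl hd * (incMat tl hd)ᵀ) * ∑ i, a i ^ 2
      ≤ ∑ l, (a (hd l) - a (tl l)) ^ 2 := by
  set A := incMat tl hd * (incMat tl hd)ᵀ with hAdef
  have hA : A.IsHermitian := (incMat_posSemidef tl hd).isHermitian
  obtain ⟨-, i₀, hi₀⟩ := lambda2_le_eigenvalues hN A hA
  set u := hA.eigenvectorBasis with hu
  -- `A` is symmetric, so pairing `A b` with an eigenvector multiplies the coefficient of `b`
  -- by the eigenvalue
  have hsymm : ∀ (i : Fin N) (b : Fin N → ℝ),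
      inner ℝ (u i) (WithLp.toLp 2 (A *ᵥ b)) = hA.eigenvalues i * inner ℝ (u i) (WithLp.toLp 2 b) := by
    intro i b
    have h1 := hA.mulVec_eigenvectorBasis i
    have hT : Aᵀ = A := by simpa [Matrix.conjTranspose_eq_transpose_of_trivial] using hA.eq
    have e1 : ∀ b : Fin N → ℝ, inner ℝ (u i) (WithLp.toLp 2 b) = b ⬝ᵥ (u i).ofLp := by
      intro b
      simp [PiLp.inner_apply, dotProduct]
    rw [e1, e1, ← Matrix.vecMul_transpose, hT, ← Matrix.dotProduct_mulVec, h1,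
      dotProduct_smul, smul_eq_mul]
  have hquad : ∀ b : Fin N → ℝ, ∑ l, (b (hd l) - b (tl l)) ^ 2
      = ∑ i, hA.eigenvalues i * (inner ℝ (u i) (WithLp.toLp 2 b)) ^ 2 := by
    intro b
    have h1 : ∑ l, (b (hd l) - b (tl l)) ^ 2 = (A *ᵥ b) ⬝ᵥ b := by
      rw [hAdef, ← Matrix.mulVec_mulVec, dotProduct_comm, Matrix.dotProduct_mulVec,
        ← Matrix.mulVec_transpose, dotProduct]
      refine Finset.sum_congr rfl fun l _ => ?_
      rw [incMat_transpose_mulVec tl hd hne]; ring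
    have h2 : (A *ᵥ b) ⬝ᵥ b = inner ℝ (WithLp.toLp 2 b) (WithLp.toLp 2 (A *ᵥ b)) := by
      simp [PiLp.inner_apply, dotProduct]
    rw [h1, h2, ← u.sum_inner_mul_inner]
    refine Finset.sum_congr rfl fun i _ => ?_
    rw [hsymm, real_inner_comm]; ring
  have hone : ∀ i, i ≠ i₀ → inner ℝ (u i) (WithLp.toLp 2 (fun _ : Fin N => (1 : ℝ))) = 0 := by
    intro i hi
    have h0 : A *ᵥ (fun _ : Fin N => (1 : ℝ)) = 0 := by
      rw [hAdef, ← Matrix.mulVec_mulVec]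
      have : (incMat tl hd)ᵀ *ᵥ (fun _ : Fin N => (1 : ℝ)) = 0 := by
        ext l; rw [incMat_transpose_mulVec tl hd hne]; simp
      rw [this, Matrix.mulVec_zero]
    have h1 := hsymm i (fun _ => 1)
    rw [h0] at h1
    have h2 : hA.eigenvalues i ≠ 0 := (hpos.trans_le (hi₀ i hi)).ne'
    have h3 : hA.eigenvalues i * inner ℝ (u i) (WithLp.toLp 2 (fun _ : Fin N => (1 : ℝ))) = 0 := by
      rw [← h1]; simp
    exact (mul_eq_zero.1 h3).resolve_left h2
  have hperp : inner ℝ (u i₀) (WithLp.toLp 2 a) = 0 := by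
    have h1 := u.sum_inner_mul_inner (WithLp.toLp 2 (fun _ : Fin N => (1 : ℝ))) (WithLp.toLp 2 a)
    have h1' := u.sum_inner_mul_inner (WithLp.toLp 2 (fun _ : Fin N => (1 : ℝ)))
      (WithLp.toLp 2 (fun _ : Fin N => (1 : ℝ)))
    rw [Finset.sum_eq_single i₀ (fun i _ hi => by rw [real_inner_comm, hone i hi, zero_mul])
      (by simp)] at h1 h1'
    have h2 : inner ℝ (WithLp.toLp 2 (fun _ : Fin N => (1 : ℝ))) (WithLp.toLp 2 a) = (0 : ℝ) := by
      simpa [PiLp.inner_apply] using ha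
    have h3 : inner ℝ (WithLp.toLp 2 (fun _ : Fin N => (1 : ℝ)))
        (WithLp.toLp 2 (fun _ : Fin N => (1 : ℝ))) = (N : ℝ) := by
      rw [PiLp.inner_apply]; simp
    rw [h2] at h1
    rw [h3] at h1'
    refine (mul_eq_zero.1 h1).resolve_left fun h0 => ?_
    rw [h0, zero_mul] at h1'
    have : (N : ℝ) ≠ 0 := by positivity
    exact this h1'.symm
  have hpars : ∑ i, a i ^ 2 = ∑ i, (inner ℝ (u i) (WithLp.toLp 2 a)) ^ 2 := by
    have h1 := u.sum_inner_mul_inner (WithLp.toLp 2 a) (WithLp.toLp 2 a)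
    have h2 : inner ℝ (WithLp.toLp 2 a) (WithLp.toLp 2 a) = ∑ i, a i ^ 2 := by
      rw [PiLp.inner_apply]; simp [sq]
    rw [← h2, ← h1]
    refine Finset.sum_congr rfl fun i _ => ?_
    rw [real_inner_comm]; ring
  rw [hquad, hpars, Finset.mul_sum]
  refine Finset.sum_le_sum fun i _ => ?_
  by_cases hi : i = i₀
  · rw [hi, hperp]; simp
  · exact mul_le_mul_of_nonneg_right (hi₀ i hi) (sq_nonneg _)

theorem sum_edge_sq_le {N M n : ℕ} (tl hd : Fin M → Fin N) (hne : ∀ l, tl l ≠ hd l)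
    (y : Fin N → EuclideanSpace ℝ (Fin n)) :
    ∑ l, ‖y (hd l) - y (tl l)‖ ^ 2 ≤ opNorm (incMat tl hd)ᵀ ^ 2 * ∑ i, ‖y i‖ ^ 2 := by
  simp only [EuclideanSpace.norm_sq_eq]
  rw [Finset.sum_comm, Finset.sum_comm (s := (Finset.univ : Finset (Fin N))), Finset.mul_sum]
  refine Finset.sum_le_sum fun k _ => ?_
  simpa using sum_edge_sq_le_scalar tl hd hne fun i => y i k

theorem lambda2_mul_le {N M n : ℕ} (hN : 2 ≤ N) (tl hd : Fin M → Fin N)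
    (hne : ∀ l, tl l ≠ hd l) (hpos : 0 < lambda2 (incMat tl hd * (incMat tl hd)ᵀ))
    (y : Fin N → EuclideanSpace ℝ (Fin n)) (hy : ∑ i, y i = 0) :
    lambda2 (incMat tl hd * (incMat tl hd)ᵀ) * ∑ i, ‖y i‖ ^ 2
      ≤ ∑ l, ‖y (hd l) - y (tl l)‖ ^ 2 := by
  simp only [EuclideanSpace.norm_sq_eq]
  rw [Finset.sum_comm, Finset.sum_comm (t := (Finset.univ : Finset (Fin n)))
    (s := (Finset.univ : Finset (Fin M))), Finset.mul_sum]
  refine Finset.sum_le_sum fun k _ => ?_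
  have hk : ∑ i, y i k = 0 := by
    have := congrArg (fun z : EuclideanSpace ℝ (Fin n) => z k) hy
    simpa using this
  simpa using lambda2_mul_le_scalar hN tl hd hne hpos (fun i => y i k) hk

/-! ### Summation over edges -/

/-- A sum over ordered adjacent pairs visits each enumerated edge once in each direction. -/
theorem sum_neighbor_eq_sum_edge {N M : ℕ} (G : SimpleGraph (Fin N)) [DecidableRel G.Adj]
    (tl hd : Fin M → Fin N) (hadj : ∀ l, G.Adj (tl l) (hd l))
    (henum : ∀ e ∈ G.edgeSet, ∃! l : Fin M, s(tl l, hd l) = e) (F : Fin N → Fin N → ℝ) :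
    ∑ i, ∑ j ∈ G.neighborFinset i, F i j = ∑ l, (F (hd l) (tl l) + F (tl l) (hd l)) := by
  have key : ∀ i j, (if G.Adj i j then F i j else 0)
      = ∑ l, ((if hd l = i ∧ tl l = j then F i j else 0)
        + (if tl l = i ∧ hd l = j then F i j else 0)) := by
    intro i j
    by_cases h : G.Adj i j
    · obtain ⟨l, hl, huniq⟩ := henum s(i, j) h
      rw [if_pos h, Finset.sum_eq_single l]
      · have hij : i ≠ j := h.ne
        rcases Sym2.eq_iff.1 hl with ⟨h1, h2⟩ | ⟨h1, h2⟩
        · simp [h1, h2, hij]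
        · simp [h1, h2, hij]
      · intro l' _ hl'
        have hn : s(tl l', hd l') ≠ s(i, j) := fun h => hl' (huniq l' h)
        rw [if_neg, if_neg, add_zero]
        · rintro ⟨h1, h2⟩; exact hn (by rw [h1, h2])
        · rintro ⟨h1, h2⟩; exact hn (by rw [h1, h2, Sym2.eq_swap])
      · simp
    · rw [if_neg h]
      refine (Finset.sum_eq_zero fun l _ => ?_).symm
      rw [if_neg, if_neg, add_zero]
      · rintro ⟨h1, h2⟩; exact h (h1 ▸ h2 ▸ hadj l)
      · rintro ⟨h1, h2⟩; exact h (h1 ▸ h2 ▸ (hadj l).symm)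
  have h1 : ∀ i, ∑ j ∈ G.neighborFinset i, F i j = ∑ j, if G.Adj i j then F i j else 0 := by
    intro i
    rw [← Finset.sum_filter]
    refine Finset.sum_congr ?_ fun _ _ => rfl
    ext j; simp
  simp_rw [h1, key]
  calc _ = ∑ i, ∑ l, ∑ j, ((if hd l = i ∧ tl l = j then F i j else 0)
        + (if tl l = i ∧ hd l = j then F i j else 0)) :=
        Finset.sum_congr rfl fun i _ => Finset.sum_comm
    _ = ∑ l, ∑ i, ∑ j, ((if hd l = i ∧ tl l = j then F i j else 0)
        + (if tl l = i ∧ hd l = j then F i j else 0)) := Finset.sum_comm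
    _ = _ := by
      refine Finset.sum_congr rfl fun l _ => ?_
      simp [Finset.sum_add_distrib, ite_and]

/-- Summation by parts for the weighted graph Laplacian. -/
theorem sum_inner_laplacian {N M n : ℕ} (G : SimpleGraph (Fin N)) [DecidableRel G.Adj]
    (tl hd : Fin M → Fin N) (hadj : ∀ l, G.Adj (tl l) (hd l))
    (henum : ∀ e ∈ G.edgeSet, ∃! l : Fin M, s(tl l, hd l) = e) (r : ℝ → ℝ)
    (x a : Fin N → EuclideanSpace ℝ (Fin n)) :
    ∑ i, inner ℝ (a i) (∑ j ∈ G.neighborFinset i, r ‖x i - x j‖ • (x i - x j))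
      = ∑ l, r ‖x (hd l) - x (tl l)‖ *
          inner ℝ (x (hd l) - x (tl l)) (a (hd l) - a (tl l)) := by
  simp_rw [inner_sum]
  rw [sum_neighbor_eq_sum_edge G tl hd hadj henum]
  refine Finset.sum_congr rfl fun l _ => ?_
  rw [norm_sub_rev (x (tl l)) (x (hd l)), ← neg_sub (x (hd l)) (x (tl l))]
  simp only [real_inner_smul_right, inner_neg_right, smul_neg, inner_sub_right]
  rw [real_inner_comm (a (hd l)), real_inner_comm (a (tl l))]
  simp only [inner_sub_right, real_inner_comm]
  ring

/-! ### Two comparison principles on an interval -/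

theorem le_of_deriv_nonpos_above {f f' : ℝ → ℝ} {b C : ℝ} (hb : 0 ≤ b)
    (hc : ContinuousOn f (Set.Icc 0 b)) (hd : ∀ t ∈ Set.Ioo 0 b, HasDerivAt f (f' t) t)
    (h0 : f 0 ≤ C) (hneg : ∀ t ∈ Set.Ioo 0 b, C < f t → f' t ≤ 0) : f b ≤ C := by
  by_contra! hcon
  set S := Set.Icc 0 b ∩ f ⁻¹' Set.Iic C with hS
  have hcl : IsClosed S := hc.preimage_isClosed_of_isClosed isClosed_Icc isClosed_Iic
  have hne : S.Nonempty := ⟨0, ⟨le_refl _, hb⟩, h0⟩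
  have hbd : BddAbove S := ⟨b, fun t ht => ht.1.2⟩
  -- the last time at which `f ≤ C`
  have hmem := hcl.csSup_mem hne hbd
  set t₀ := sSup S
  have habove : ∀ t ∈ Set.Ioc t₀ b, C < f t := by
    intro t ht
    by_contra! hle
    exact absurd (le_csSup hbd ⟨⟨hmem.1.1.trans ht.1.le, ht.2⟩, hle⟩) (not_le.2 ht.1)
  have hanti : AntitoneOn f (Set.Icc t₀ b) := by
    refine antitoneOn_of_hasDerivWithinAt_nonpos (f' := f') (convex_Icc _ _)
      (hc.mono (Set.Icc_subset_Icc_left hmem.1.1)) ?_ ?_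
    · intro t ht
      rw [interior_Icc] at ht
      exact (hd t ⟨hmem.1.1.trans_lt ht.1, ht.2⟩).hasDerivWithinAt
    · intro t ht
      rw [interior_Icc] at ht
      exact hneg t ⟨hmem.1.1.trans_lt ht.1, ht.2⟩ (habove t ⟨ht.1, ht.2.le⟩)
  have := hanti ⟨le_refl _, hmem.1.2⟩ ⟨hmem.1.2, le_refl _⟩ hmem.1.2
  have h3 : f t₀ ≤ C := hmem.2
  linarith

/-- A finite family cannot reach the level `C` if any member that is the first to touch it
has negative derivative there. -/
theorem lt_of_deriv_neg_at_level {ι : Type*} [Finite ι] {f f' : ι → ℝ → ℝ} {b C : ℝ}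
    (hc : ∀ i, ContinuousOn (f i) (Set.Icc 0 b))
    (hd : ∀ i, ∀ t ∈ Set.Ioc 0 b, HasDerivWithinAt (f i) (f' i t) (Set.Icc 0 b) t)
    (h0 : ∀ i, f i 0 < C)
    (hneg : ∀ i, ∀ t ∈ Set.Ioc 0 b, (∀ j, f j t ≤ C) → f i t = C → f' i t < 0) :
    ∀ t ∈ Set.Icc 0 b, ∀ i, f i t < C := by
  by_contra! hcon
  obtain ⟨τ, hτ, i', hi'⟩ := hcon
  set S := ⋃ i, Set.Icc 0 b ∩ f i ⁻¹' Set.Ici C with hS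
  have hcl : IsClosed S := isClosed_iUnion_of_finite fun i =>
    (hc i).preimage_isClosed_of_isClosed isClosed_Icc isClosed_Ici
  have hne : S.Nonempty := ⟨τ, Set.mem_iUnion.2 ⟨i', hτ, hi'⟩⟩
  have hbd : BddBelow S := ⟨0, fun t ht => by
    obtain ⟨i, hi⟩ := Set.mem_iUnion.1 ht
    exact hi.1.1⟩
  have hmem := hcl.csInf_mem hne hbd
  set t₁ := sInf S
  obtain ⟨i, ⟨ht₁, hi⟩⟩ := Set.mem_iUnion.1 hmem
  have hi : C ≤ f i t₁ := hi
  have hpos : 0 < t₁ := by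
    refine lt_of_le_of_ne ht₁.1 fun h => ?_
    rw [← h] at hi
    exact absurd hi (not_le.2 (h0 i))
  have hlt : ∀ t ∈ Set.Ico 0 t₁, ∀ j, f j t < C := by
    intro t ht j
    by_contra! hle
    exact absurd (csInf_le hbd (Set.mem_iUnion.2
      ⟨j, ⟨ht.1, ht.2.le.trans ht₁.2⟩, hle⟩)) (not_le.2 ht.2)
  have hIoo : Set.Ioo 0 t₁ ∈ nhdsWithin t₁ (Set.Iio t₁) := Ioo_mem_nhdsLT hpos
  have hsub : Set.Ioo 0 t₁ ⊆ Set.Icc 0 b := fun t ht => ⟨ht.1.le, ht.2.le.trans ht₁.2⟩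
  have hnb : (nhdsWithin t₁ (Set.Ioo 0 t₁)).NeBot := by
    rw [nhdsWithin_Ioo_eq_nhdsLT hpos]; infer_instance
  have hle : ∀ j, f j t₁ ≤ C := by
    intro j
    refine le_of_tendsto (((hc j) t₁ ht₁).mono hsub) ?_
    filter_upwards [self_mem_nhdsWithin] with t ht
    exact (hlt t ⟨ht.1.le, ht.2⟩ j).le
  have heq : f i t₁ = C := le_antisymm (hle i) hi
  have hder := hneg i t₁ ⟨hpos, ht₁.2⟩ hle heq
  have hslope := (hasDerivWithinAt_iff_tendsto_slope' (fun h => lt_irrefl _ h.2)).1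
    ((hd i t₁ ⟨hpos, ht₁.2⟩).mono hsub)
  refine absurd (ge_of_tendsto hslope ?_) (not_le.2 hder)
  filter_upwards [self_mem_nhdsWithin] with t ht
  rw [slope_def_field]
  have h1 := hlt t ⟨ht.1.le, ht.2⟩ i
  exact div_nonneg_of_nonpos (by linarith) (by linarith [ht.2])

/-! ### The edge potential as a function of the squared length -/

/-- The potential `½ ∫₀^u r(√w) dw`, which satisfies `Pfun r ρ = sqPot r (ρ ^ 2)`. Since
`√w = 0` for `w ≤ 0`, it is differentiable on all of `ℝ`, so that composing it with a
squared norm raises no question of differentiability at coinciding agents. -/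
noncomputable def sqPot (r : ℝ → ℝ) (u : ℝ) : ℝ := ∫ w in (0 : ℝ)..u, r (Real.sqrt w) / 2

theorem continuous_comp_sqrt {r : ℝ → ℝ} (hr : ContinuousOn r (Set.Ici 0)) :
    Continuous fun w => r (Real.sqrt w) / 2 :=
  (hr.comp_continuous Real.continuous_sqrt fun w => Real.sqrt_nonneg w).div_const 2

theorem hasDerivAt_sqPot {r : ℝ → ℝ} (hr : ContinuousOn r (Set.Ici 0)) (u : ℝ) :
    HasDerivAt (sqPot r) (r (Real.sqrt u) / 2) u :=
  (continuous_comp_sqrt hr).integral_hasStrictDerivAt 0 u |>.hasDerivAt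

theorem sqPot_strictMono {r : ℝ → ℝ} (hr : ContinuousOn r (Set.Ici 0))
    (hmono : MonotoneOn r (Set.Ici 0)) (hr0 : 0 < r 0) : StrictMono (sqPot r) := by
  refine strictMono_of_hasDerivAt_pos (hasDerivAt_sqPot hr) fun u => ?_
  have := hmono (Set.mem_Ici.2 le_rfl) (Set.mem_Ici.2 (Real.sqrt_nonneg u)) (Real.sqrt_nonneg u)
  linarith

theorem Pfun_eq_sqPot {r : ℝ → ℝ} (hr : ContinuousOn r (Set.Ici 0)) {ρ : ℝ} (hρ : 0 ≤ ρ) :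
    Pfun r ρ = sqPot r (ρ ^ 2) := by
  have h := intervalIntegral.integral_comp_mul_deriv (a := 0) (b := ρ)
    (f := fun s : ℝ => s ^ 2) (f' := fun s : ℝ => 2 * s) (g := fun w => r (Real.sqrt w) / 2)
    (fun s _ => by simpa using hasDerivAt_pow 2 s) (by fun_prop) (continuous_comp_sqrt hr)
  rw [Pfun, sqPot]
  simp only [ne_eq, OfNat.ofNat_ne_zero, not_false_eq_true, zero_pow] at h
  rw [← h]
  refine intervalIntegral.integral_congr fun s hs => ?_
  rw [Set.uIcc_of_le hρ] at hs
  simp only [Function.comp, Real.sqrt_sq hs.1]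
  ring

/-! ### The repulsive field -/

/-- The repulsive field is dissipative on the ball: it is radial with a nonincreasing
(signed) radial profile. -/
theorem gfun_dissipative {n : ℕ} {c δ ε 𝔯 : ℝ} {h : ℝ → ℝ} (hε : 0 < ε) (hε𝔯 : ε < 𝔯)
    (hc : 0 ≤ c) (hδ : 0 ≤ δ) (hmono : StrictMonoOn h (Set.Icc 0 1))
    (hrange : ∀ s ∈ Set.Icc (0:ℝ) 1, h s ∈ Set.Icc (0:ℝ) 1)
    {x y : EuclideanSpace ℝ (Fin n)} (hx : ‖x‖ < 𝔯) (hy : ‖y‖ < 𝔯) :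
    inner ℝ (x - y) (gfun c δ ε 𝔯 h x - gfun c δ ε 𝔯 h y) ≤ 0 := by
  set ψ : ℝ → ℝ := fun s => if 𝔯 - ε ≤ s then c * δ * h ((ε + s - 𝔯) / ε) / s else 0 with hψ
  have hg : ∀ z : EuclideanSpace ℝ (Fin n), gfun c δ ε 𝔯 h z = -(ψ ‖z‖ • z) := by
    intro z
    simp only [gfun, hψ]
    split_ifs
    · rw [neg_smul]
    · simp
  have harg : ∀ s, 𝔯 - ε ≤ s → s < 𝔯 → (ε + s - 𝔯) / ε ∈ Set.Icc (0:ℝ) 1 := fun s h1 h2 =>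
    ⟨div_nonneg (by linarith) hε.le, (div_le_one hε).2 (by linarith)⟩
  have hψ0 : ∀ s, s < 𝔯 → 0 ≤ ψ s := by
    intro s hs
    simp only [hψ]
    split_ifs with h1
    · have := (hrange _ (harg s h1 hs)).1
      have hs0 : 0 ≤ s := by linarith
      positivity
    · exact le_rfl
  have hφ : ∀ s t, s ≤ t → t < 𝔯 → ψ s * s ≤ ψ t * t := by
    intro s t hst ht
    by_cases h1 : 𝔯 - ε ≤ s
    · have h2 : 𝔯 - ε ≤ t := h1.trans hst
      simp only [hψ, if_pos h1, if_pos h2]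
      rw [div_mul_cancel₀ _ (by linarith : 0 < s).ne', div_mul_cancel₀ _ (by linarith : 0 < t).ne']
      refine mul_le_mul_of_nonneg_left ?_ (mul_nonneg hc hδ)
      refine hmono.monotoneOn (harg s h1 (hst.trans_lt ht)) (harg t h2 ht) ?_
      gcongr
    · have h3 : ψ s = 0 := by simp only [hψ, if_neg h1]
      rw [h3, zero_mul]
      by_cases h2 : 𝔯 - ε ≤ t
      · exact mul_nonneg (hψ0 t ht) (by linarith)
      · simp only [hψ, if_neg h2, zero_mul, le_refl]
  have hmul : 0 ≤ (ψ ‖x‖ * ‖x‖ - ψ ‖y‖ * ‖y‖) * (‖x‖ - ‖y‖) := by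
    rcases le_total ‖x‖ ‖y‖ with hxy | hxy
    · exact mul_nonneg_of_nonpos_of_nonpos (by linarith [hφ _ _ hxy hy]) (by linarith)
    · exact mul_nonneg (by linarith [hφ _ _ hxy hx]) (by linarith)
  have hcs := mul_le_mul_of_nonneg_left (real_inner_le_norm x y)
    (add_nonneg (hψ0 _ hx) (hψ0 _ hy))
  rw [hg, hg]
  have hexp : inner ℝ (x - y) (-(ψ ‖x‖ • x) - -(ψ ‖y‖ • y))
      = -(ψ ‖x‖ * ‖x‖ ^ 2 + ψ ‖y‖ * ‖y‖ ^ 2 - (ψ ‖x‖ + ψ ‖y‖) * inner ℝ x y) := by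
    simp only [inner_sub_left, inner_sub_right, inner_neg_right, real_inner_smul_right,
      real_inner_self_eq_norm_sq, real_inner_comm x y]
    ring
  rw [hexp]
  nlinarith

/-- Beyond the critical radius the repulsion strictly dominates inputs of size `δ`. -/
theorem inner_gfun_lt {n : ℕ} {c δ ε 𝔯 ct : ℝ} {h : ℝ → ℝ} (hε : 0 < ε) (hε𝔯 : ε < 𝔯)
    (hc : 1 < c) (hδ : 0 < δ) (hmono : StrictMonoOn h (Set.Icc 0 1)) (hct : 1 < ct)
    (hhct : h (1 / ct) = 1 / c) {x : EuclideanSpace ℝ (Fin n)}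
    (hx₁ : 𝔯 - ((ct - 1) / ct) * ε < ‖x‖) (hx₂ : ‖x‖ < 𝔯) :
    inner ℝ x (gfun c δ ε 𝔯 h x) < -(δ * ‖x‖) := by
  have hct0 : 0 < ct := by linarith
  have e1 : (ct - 1) / ct = 1 - 1 / ct := by field_simp
  have h1ct : 1 / ct < 1 := by rw [div_lt_one hct0]; exact hct
  have h1ct' : 0 < 1 / ct := by positivity
  rw [e1] at hx₁
  have hge : 𝔯 - ε ≤ ‖x‖ := by nlinarith
  have hxpos : 0 < ‖x‖ := by linarith
  have harg : 1 / ct < (ε + ‖x‖ - 𝔯) / ε := by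
    rw [lt_div_iff₀ hε]; nlinarith
  have hh : 1 / c < h ((ε + ‖x‖ - 𝔯) / ε) := by
    rw [← hhct]
    exact hmono ⟨h1ct'.le, h1ct.le⟩ ⟨(h1ct'.trans harg).le, (div_le_one hε).2 (by linarith)⟩ harg
  have hc0 : 0 < c := by linarith
  have hch : 1 < c * h ((ε + ‖x‖ - 𝔯) / ε) := by
    rw [div_lt_iff₀ hc0] at hh; linarith
  rw [gfun, if_pos hge, real_inner_smul_right, real_inner_self_eq_norm_sq]
  have e2 : -(c * δ * h ((ε + ‖x‖ - 𝔯) / ε) / ‖x‖) * ‖x‖ ^ 2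
      = -((c * h ((ε + ‖x‖ - 𝔯) / ε)) * (δ * ‖x‖)) := by
    field_simp
  rw [e2]
  have : 0 < δ * ‖x‖ := by positivity
  nlinarith

/-! ### Dissipation of the total potential -/

/-- The balance of constants behind `input_power_le`: there `S` is the sum of the edge lengths,
`Y2` the squared deviation from the mean, `s` the largest edge length and `ρ = r s`. -/
theorem power_arith {W D δ ρ s lam r₀ Y2 S : ℝ} (hY : 0 ≤ Y2)
    (hpos : 0 ≤ 2 * W * D * δ * ρ) (h1 : 2 * S ^ 2 ≤ W ^ 2 * D ^ 2 * Y2)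
    (h2 : 2 * W * D * δ * ρ ≤ lam ^ 2 * r₀ ^ 2 * s) (h3 : s ^ 2 ≤ 2 * Y2) :
    2 * δ * ρ * S ≤ (lam * r₀) ^ 2 * Y2 := by
  have h4 := pow_le_pow_left₀ hpos h2 2
  refine (abs_le_of_sq_le_sq' ?_ (by positivity)).2
  calc (2 * δ * ρ * S) ^ 2 = 2 * (δ * ρ) ^ 2 * (2 * S ^ 2) := by ring
    _ ≤ 2 * (δ * ρ) ^ 2 * (W ^ 2 * D ^ 2 * Y2) := by gcongr
    _ = (2 * W * D * δ * ρ) ^ 2 * Y2 / 2 := by ring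
    _ ≤ (lam ^ 2 * r₀ ^ 2 * s) ^ 2 * Y2 / 2 := by gcongr
    _ = (lam ^ 2 * r₀ ^ 2) ^ 2 * s ^ 2 * Y2 / 2 := by ring
    _ ≤ (lam ^ 2 * r₀ ^ 2) ^ 2 * (2 * Y2) * Y2 / 2 := by gcongr
    _ = ((lam * r₀) ^ 2 * Y2) ^ 2 := by ring

/-- Once some edge has length at least `R'`, the dissipation of the weighted Laplacian
dominates the power injected by inputs of size `δ`. The bounds are
`∑ ‖ξ i‖² ≥ r(0)² λ₂² Y²` and `power ≤ 2 δ r(s) √M |Dᵀ| Y`, where `Y` is the norm of the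
deviation from the mean and `s ≤ √2 Y` the largest edge length. -/
theorem input_power_le {N M n : ℕ} (hN : 2 ≤ N)
    (G : SimpleGraph (Fin N)) [DecidableRel G.Adj]
    (tl hd : Fin M → Fin N) (hadj : ∀ l, G.Adj (tl l) (hd l))
    (henum : ∀ e ∈ G.edgeSet, ∃! l : Fin M, s(tl l, hd l) = e)
    (hM : G.edgeFinset.card = M)
    (r : ℝ → ℝ) (hr_mono : MonotoneOn r (Set.Ici 0)) (hr0 : 0 < r 0)
    (R' δ : ℝ) (hR'pos : 0 < R') (hδpos : 0 < δ)
    (hδ : ∀ s ≥ R', δ ≤ (1 / Kconst tl hd) * (r 0) ^ 2 * (s / r s))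
    (x v : Fin N → EuclideanSpace ℝ (Fin n)) (hv : ∀ i, ‖v i‖ ≤ δ)
    (hlong : ∃ l, R' ≤ ‖x (hd l) - x (tl l)‖) :
    ∑ l, r ‖x (hd l) - x (tl l)‖ * inner ℝ (x (hd l) - x (tl l)) (v (hd l) - v (tl l))
      ≤ ∑ i, ‖∑ j ∈ G.neighborFinset i, r ‖x i - x j‖ • (x i - x j)‖ ^ 2 := by
  have hne : ∀ l, tl l ≠ hd l := fun l => (hadj l).ne
  set ξ : Fin N → EuclideanSpace ℝ (Fin n) :=
    fun i => ∑ j ∈ G.neighborFinset i, r ‖x i - x j‖ • (x i - x j) with hξ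
  set z : Fin M → EuclideanSpace ℝ (Fin n) := fun l => x (hd l) - x (tl l) with hz
  obtain ⟨l₁, hl₁⟩ := hlong
  obtain ⟨l₀, -, hmax⟩ := Finset.exists_max_image Finset.univ (fun l => ‖z l‖)
    ⟨l₁, Finset.mem_univ _⟩
  set s := ‖z l₀‖ with hs
  have hsR : R' ≤ s := hl₁.trans (hmax l₁ (Finset.mem_univ _))
  have hrge : ∀ u, 0 ≤ u → r 0 ≤ r u := fun u hu =>
    hr_mono (Set.mem_Ici.2 le_rfl) (Set.mem_Ici.2 hu) hu
  have hrs : 0 < r s := hr0.trans_le (hrge s (norm_nonneg _))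
  set μ : EuclideanSpace ℝ (Fin n) := (N : ℝ)⁻¹ • ∑ i, x i with hμ
  set y : Fin N → EuclideanSpace ℝ (Fin n) := fun i => x i - μ with hy
  have hNpos : (N : ℝ) ≠ 0 := by positivity
  have hysum : ∑ i, y i = 0 := by
    simp only [hy, Finset.sum_sub_distrib, Finset.sum_const, Finset.card_univ, Fintype.card_fin]
    rw [hμ, ← Nat.cast_smul_eq_nsmul ℝ, smul_smul, mul_inv_cancel₀ hNpos, one_smul, sub_self]
  have hyz : ∀ l, y (hd l) - y (tl l) = z l := fun l => by simp [hy, hz]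
  set Y2 := ∑ i, ‖y i‖ ^ 2 with hY2
  set Z2 := ∑ l, ‖z l‖ ^ 2 with hZ2
  set lam := lambda2 (incMat tl hd * (incMat tl hd)ᵀ) with hlam
  set D := opNorm (incMat tl hd)ᵀ with hD
  have hD0 : 0 ≤ D := norm_nonneg _
  have hlam0 : 0 ≤ lam := lambda2_nonneg hN tl hd
  have hspos : 0 < s := hR'pos.trans_le hsR
  set W := Real.sqrt ((N : ℝ) * ((N : ℝ) - 1)) with hW
  have hW0 : 0 ≤ W := Real.sqrt_nonneg _
  have hK : Kconst tl hd = 2 * W * D / lam ^ 2 := rfl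
  -- if `K = 0`, then `1 / K = 0` and the bound on `δ` would contradict `δ > 0`
  have hKne : Kconst tl hd ≠ 0 := by
    intro h0
    have := hδ s hsR
    rw [h0] at this
    simp at this
    linarith
  have hlampos : 0 < lam := by
    refine lt_of_le_of_ne hlam0 fun h0 => hKne ?_
    rw [hK, ← h0]; simp
  have hδ' : 2 * W * D * δ * r s ≤ lam ^ 2 * (r 0) ^ 2 * s := by
    have hKpos : 0 < 2 * W * D := by
      refine lt_of_le_of_ne (by positivity) fun h0 => hKne ?_
      rw [hK, ← h0]; simp
    have h1 := hδ s hsR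
    rw [hK] at h1
    have e : 1 / (2 * W * D / lam ^ 2) * r 0 ^ 2 * (s / r s)
        = (lam ^ 2 * r 0 ^ 2 * s) / (2 * W * D * r s) := by
      field_simp
    rw [e, le_div_iff₀ (by positivity)] at h1
    linarith
  have hZD : Z2 ≤ D ^ 2 * Y2 := by
    have := sum_edge_sq_le tl hd hne y
    simpa only [hyz] using this
  have hZlam : lam * Y2 ≤ Z2 := by
    have := lambda2_mul_le hN tl hd hne hlampos y hysum
    simpa only [hyz] using this
  have hY20 : 0 ≤ Y2 := Finset.sum_nonneg fun i _ => sq_nonneg _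
  have hZ20 : 0 ≤ Z2 := Finset.sum_nonneg fun i _ => sq_nonneg _
  have hsY : s ^ 2 ≤ 2 * Y2 := by
    have h1 : ‖y (hd l₀)‖ ^ 2 + ‖y (tl l₀)‖ ^ 2 ≤ Y2 := by
      rw [← Finset.sum_pair (f := fun i => ‖y i‖ ^ 2) (hne l₀).symm]
      exact Finset.sum_le_sum_of_subset_of_nonneg (Finset.subset_univ _)
        fun _ _ _ => sq_nonneg _
    have h2 : s ≤ ‖y (hd l₀)‖ + ‖y (tl l₀)‖ := by
      rw [hs, ← hyz]; exact norm_sub_le _ _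
    nlinarith [sq_nonneg (‖y (hd l₀)‖ - ‖y (tl l₀)‖)]
  -- a simple graph has at most `N (N - 1) / 2` edges
  have hMW : 2 * (M : ℝ) ≤ W ^ 2 := by
    have h1 : M ≤ N.choose 2 := by
      have := G.card_edgeFinset_le_card_choose_two
      rw [hM] at this
      simpa using this
    have h2 : (M : ℝ) ≤ (N : ℝ) * ((N : ℝ) - 1) / 2 := by
      rw [← Nat.cast_choose_two]; exact_mod_cast h1
    have h3 : (2 : ℝ) ≤ N := by exact_mod_cast hN
    rw [hW, Real.sq_sqrt (by nlinarith)]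
    linarith
  have hdiss : (lam * r 0) ^ 2 * Y2 ≤ ∑ i, ‖ξ i‖ ^ 2 := by
    have h1 : ∑ i, inner ℝ (y i) (ξ i) = ∑ l, r ‖z l‖ * ‖z l‖ ^ 2 := by
      rw [sum_inner_laplacian G tl hd hadj henum r x y]
      refine Finset.sum_congr rfl fun l _ => ?_
      rw [hyz, real_inner_self_eq_norm_sq]
    have h2 : r 0 * Z2 ≤ ∑ l, r ‖z l‖ * ‖z l‖ ^ 2 := by
      rw [hZ2, Finset.mul_sum]
      exact Finset.sum_le_sum fun l _ =>
        mul_le_mul_of_nonneg_right (hrge _ (norm_nonneg _)) (sq_nonneg _)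
    have h3 : ∑ i, inner ℝ (y i) (ξ i) ≤ ∑ i, ‖y i‖ * ‖ξ i‖ :=
      Finset.sum_le_sum fun i _ => real_inner_le_norm _ _
    have h4 : (∑ i, ‖y i‖ * ‖ξ i‖) ^ 2 ≤ Y2 * ∑ i, ‖ξ i‖ ^ 2 :=
      Finset.sum_mul_sq_le_sq_mul_sq _ _ _
    have h5 : r 0 * (lam * Y2) ≤ ∑ i, ‖y i‖ * ‖ξ i‖ :=
      (mul_le_mul_of_nonneg_left hZlam hr0.le).trans (h2.trans (h1 ▸ h3))
    have h6 : (r 0 * (lam * Y2)) ^ 2 ≤ Y2 * ∑ i, ‖ξ i‖ ^ 2 :=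
      (pow_le_pow_left₀ (mul_nonneg hr0.le (mul_nonneg hlam0 hY20)) h5 2).trans h4
    have hY2pos : 0 < Y2 := by nlinarith
    refine le_of_mul_le_mul_left ?_ hY2pos
    calc _ = (r 0 * (lam * Y2)) ^ 2 := by ring
      _ ≤ _ := h6
  have hpow : ∑ l, r ‖z l‖ * inner ℝ (z l) (v (hd l) - v (tl l))
      ≤ 2 * δ * r s * ∑ l, ‖z l‖ := by
    rw [Finset.mul_sum]
    refine Finset.sum_le_sum fun l _ => ?_
    have h1 : r ‖z l‖ ≤ r s := hr_mono (Set.mem_Ici.2 (norm_nonneg _))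
      (Set.mem_Ici.2 (norm_nonneg _)) (hmax l (Finset.mem_univ _))
    have h2 : ‖v (hd l) - v (tl l)‖ ≤ 2 * δ :=
      (norm_sub_le _ _).trans (by linarith [hv (hd l), hv (tl l)])
    have h3 : inner ℝ (z l) (v (hd l) - v (tl l)) ≤ ‖z l‖ * (2 * δ) :=
      (real_inner_le_norm _ _).trans (mul_le_mul_of_nonneg_left h2 (norm_nonneg _))
    have h4 : 0 ≤ r ‖z l‖ := hr0.le.trans (hrge _ (norm_nonneg _))
    calc _ ≤ r ‖z l‖ * (‖z l‖ * (2 * δ)) := mul_le_mul_of_nonneg_left h3 h4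
      _ ≤ r s * (‖z l‖ * (2 * δ)) := mul_le_mul_of_nonneg_right h1
        (mul_nonneg (norm_nonneg _) (mul_nonneg two_pos.le hδpos.le))
      _ = _ := by ring
  have hsum : (∑ l, ‖z l‖) ^ 2 ≤ M * Z2 := by
    have := sq_sum_le_card_mul_sum_sq (s := (Finset.univ : Finset (Fin M))) (f := fun l => ‖z l‖)
    simpa using this
  refine (hpow.trans ?_).trans hdiss
  have h1 : 2 * (∑ l, ‖z l‖) ^ 2 ≤ W ^ 2 * D ^ 2 * Y2 := by
    calc 2 * (∑ l, ‖z l‖) ^ 2 ≤ (2 * M) * Z2 := by linarith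
      _ ≤ W ^ 2 * (D ^ 2 * Y2) := mul_le_mul hMW hZD hZ20 (sq_nonneg W)
      _ = _ := by ring
  exact power_arith hY20
    (mul_nonneg (mul_nonneg (mul_nonneg (mul_nonneg two_pos.le hW0) hD0) hδpos.le) hrs.le) h1 hδ' hsY

/-- **Robust connectivity with invariance of a spherical domain (Proposition 2).** If the
agents evolve according to `ẋ_i = g(x_i) - ∑_{j∈N_i} r(‖x_i-x_j‖)(x_i-x_j) + v_i` on `[0,T)`
with `r` satisfying Property (P), `c > 1`, `‖v_i(t)‖ ≤ δ ≤ (1/K) r(0)² s / r(s)` for all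
`s ≥ R̃`, `M P(R̃) ≤ P(R)`, initial states in `D_ε` and initial edge lengths at most `R̃`,
then for all `t ∈ [0,T)` all edge lengths are at most `R`, all agents stay in the open ball
of radius `𝔯` and in fact `‖x_i(t)‖ ≤ 𝔯 - ((c̃-1)/c̃) ε`, where `h(1/c̃) = 1/c`, `c̃ > 1`. -/
theorem robust_connectivity_invariance {N M n : ℕ} (hN : 2 ≤ N)
    (G : SimpleGraph (Fin N)) [DecidableRel G.Adj] (hconn : G.Connected)
    (tl hd : Fin M → Fin N) (hadj : ∀ l, G.Adj (tl l) (hd l))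
    (henum : ∀ e ∈ G.edgeSet, ∃! l : Fin M, s(tl l, hd l) = e)
    (hM : G.edgeFinset.card = M)
    (r : ℝ → ℝ) (hr_cont : ContinuousOn r (Set.Ici 0))
    (hr_mono : MonotoneOn r (Set.Ici 0)) (hr_nonneg : ∀ s ∈ Set.Ici (0:ℝ), 0 ≤ r s)
    (hr0 : 0 < r 0)
    (ε 𝔯 : ℝ) (hε : 0 < ε) (hε𝔯 : ε < 𝔯)
    (h : ℝ → ℝ) (hh_lip : ∃ L : NNReal, LipschitzOnWith L h (Set.Icc 0 1))
    (hh0 : h 0 = 0) (hh1 : h 1 = 1) (hh_mono : StrictMonoOn h (Set.Icc 0 1))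
    (hh_range : ∀ s ∈ Set.Icc (0:ℝ) 1, h s ∈ Set.Icc (0:ℝ) 1)
    (c : ℝ) (hc : 1 < c)
    (ct : ℝ) (hct : 1 < ct) (hhct : h (1 / ct) = 1 / c)
    (R R' δ T : ℝ) (hR'pos : 0 < R') (hR'R : R' < R) (hδpos : 0 < δ)
    (hδ : ∀ s ≥ R', δ ≤ (1 / Kconst tl hd) * (r 0) ^ 2 * (s / r s))
    (hP : (M : ℝ) * Pfun r R' ≤ Pfun r R)
    (x v : Fin N → ℝ → EuclideanSpace ℝ (Fin n))
    (hdyn : ∀ i, ∀ t ∈ Set.Ico (0:ℝ) T, HasDerivWithinAt (x i)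
      (gfun c δ ε 𝔯 h (x i t) +
        (-∑ j ∈ G.neighborFinset i, r ‖x i t - x j t‖ • (x i t - x j t)) + v i t)
      (Set.Ico (0:ℝ) T) t)
    (hv : ∀ i, ∀ t ∈ Set.Ico (0:ℝ) T, ‖v i t‖ ≤ δ)
    (hinit_dom : ∀ i, ‖x i 0‖ < 𝔯 - ε)
    (hinit : ∀ i j, G.Adj i j → ‖x i 0 - x j 0‖ ≤ R') :
    ∀ t ∈ Set.Ico (0:ℝ) T,
      (∀ i j, G.Adj i j → ‖x i t - x j t‖ ≤ R) ∧
      (∀ i, ‖x i t‖ < 𝔯) ∧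
      (∀ i, ‖x i t‖ ≤ 𝔯 - ((ct - 1) / ct) * ε) := by
  classical
  have hct0 : 0 < ct := by linarith
  have hfrac : (ct - 1) / ct < 1 := by rw [div_lt_one hct0]; linarith
  have hfrac0 : 0 < (ct - 1) / ct := div_pos (by linarith) hct0
  set F : Fin N → ℝ → EuclideanSpace ℝ (Fin n) := fun i t => gfun c δ ε 𝔯 h (x i t) +
    (-∑ j ∈ G.neighborFinset i, r ‖x i t - x j t‖ • (x i t - x j t)) + v i t with hF
  have hdyn' : ∀ i, ∀ t ∈ Set.Ico (0:ℝ) T, HasDerivWithinAt (x i) (F i t) (Set.Ico 0 T) t := hdyn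
  have hIcc : ∀ {t}, t ∈ Set.Ico (0:ℝ) T → Set.Icc 0 t ⊆ Set.Ico 0 T := fun ht _ hs =>
    ⟨hs.1, hs.2.trans_lt ht.2⟩
  have hball : ∀ ρ, 𝔯 - ((ct - 1) / ct) * ε < ρ → ρ < 𝔯 → ∀ t ∈ Set.Ico (0:ℝ) T, ∀ i,
      ‖x i t‖ < ρ := by
    intro ρ hρ₁ hρ₂ t ht i
    have hρε : 𝔯 - ε < ρ := by nlinarith
    have hρ0 : 0 < ρ := by linarith
    refine lt_of_pow_lt_pow_left₀ 2 hρ0.le ?_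
    have hder : ∀ i, ∀ s ∈ Set.Icc (0:ℝ) t, HasDerivWithinAt (fun s => ‖x i s‖ ^ 2)
        (2 * inner ℝ (x i s) (F i s)) (Set.Icc 0 t) s := fun i s hs =>
      ((hdyn' i s (hIcc ht hs)).mono (hIcc ht)).norm_sq
    refine lt_of_deriv_neg_at_level (f := fun i s => ‖x i s‖ ^ 2)
      (f' := fun i s => 2 * inner ℝ (x i s) (F i s))
      (fun i s hs => (hder i s hs).continuousWithinAt) (fun i s hs => hder i s ⟨hs.1.le, hs.2⟩)
      (fun i => pow_lt_pow_left₀ ((hinit_dom i).trans hρε) (norm_nonneg _) two_ne_zero) ?_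
      t ⟨ht.1, le_rfl⟩ i
    intro i s hs hall heq
    have hs' := hIcc ht ⟨hs.1.le, hs.2⟩
    have hxi : ‖x i s‖ = ρ := (pow_left_inj₀ (norm_nonneg _) hρ0.le two_ne_zero).1 heq
    have hxj : ∀ j, ‖x j s‖ ≤ ρ := fun j => (pow_le_pow_iff_left₀ (norm_nonneg _) hρ0.le two_ne_zero).1 (hall j)
    have h1 := inner_gfun_lt hε hε𝔯 hc hδpos hh_mono hct hhct (x := x i s)
      (by rw [hxi]; exact hρ₁) (by rw [hxi]; exact hρ₂)
    -- the neighbours lie in the ball of radius `‖x i s‖`, hence pull agent `i` inwards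
    have h2 : 0 ≤ inner ℝ (x i s) (∑ j ∈ G.neighborFinset i, r ‖x i s - x j s‖ • (x i s - x j s)) := by
      rw [inner_sum]
      refine Finset.sum_nonneg fun j _ => ?_
      rw [real_inner_smul_right, inner_sub_right, real_inner_self_eq_norm_sq]
      refine mul_nonneg (hr_nonneg _ (norm_nonneg _)) ?_
      have := real_inner_le_norm (x i s) (x j s)
      rw [hxi] at this ⊢
      nlinarith [hxj j]
    have h3 : inner ℝ (x i s) (v i s) ≤ δ * ‖x i s‖ := by
      refine (real_inner_le_norm _ _).trans ?_
      rw [mul_comm]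
      exact mul_le_mul_of_nonneg_right (hv i s hs') (norm_nonneg _)
    have : inner ℝ (x i s) (F i s) < 0 := by
      simp only [hF, inner_add_right, inner_neg_right]
      linarith
    linarith
  have hle : ∀ t ∈ Set.Ico (0:ℝ) T, ∀ i, ‖x i t‖ ≤ 𝔯 - ((ct - 1) / ct) * ε := by
    intro t ht i
    refine le_of_forall_gt_imp_ge_of_dense fun ρ hρ => ?_
    rcases lt_or_ge ρ 𝔯 with h | h
    · exact (hball ρ hρ h t ht i).le
    · exact (hball (𝔯 - ((ct - 1) / ct) * ε / 2) (by nlinarith) (by nlinarith) t ht i).le.trans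
        (by nlinarith)
  have hlt : ∀ t ∈ Set.Ico (0:ℝ) T, ∀ i, ‖x i t‖ < 𝔯 := fun t ht i =>
    (hle t ht i).trans_lt (by nlinarith)
  intro t ht
  refine ⟨?_, hlt t ht, hle t ht⟩
  set V : ℝ → ℝ := fun s => ∑ l, sqPot r (‖x (hd l) s - x (tl l) s‖ ^ 2) with hVdef
  set V' : ℝ → ℝ := fun s => ∑ l, r ‖x (hd l) s - x (tl l) s‖ *
    inner ℝ (x (hd l) s - x (tl l) s) (F (hd l) s - F (tl l) s) with hV'def
  have hmonoQ := sqPot_strictMono hr_cont hr_mono hr0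
  have hQ0 : sqPot r 0 = 0 := by simp [sqPot]
  have hderV : ∀ s ∈ Set.Ico (0:ℝ) T, HasDerivWithinAt V (V' s) (Set.Ico 0 T) s := by
    intro s hs
    refine HasDerivWithinAt.fun_sum fun l _ => ?_
    have h1 := ((hdyn' (hd l) s hs).fun_sub (hdyn' (tl l) s hs)).norm_sq
    have h2 := (hasDerivAt_sqPot hr_cont (‖x (hd l) s - x (tl l) s‖ ^ 2)).comp_hasDerivWithinAt
      (h₂ := sqPot r) s h1
    refine h2.congr_deriv ?_
    rw [Real.sqrt_sq (norm_nonneg _)]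
    ring
  have hV : V t ≤ M * sqPot r (R' ^ 2) := by
    refine le_of_deriv_nonpos_above (f' := V') ht.1
      (fun s hs => ((hderV s (hIcc ht hs)).mono (hIcc ht)).continuousWithinAt) ?_ ?_ ?_
    · intro s hs
      exact (hderV s ⟨hs.1.le, hs.2.trans ht.2⟩).hasDerivAt
        (Ico_mem_nhds hs.1 (hs.2.trans ht.2))
    · calc V 0 ≤ ∑ _l : Fin M, sqPot r (R' ^ 2) := by
            refine Finset.sum_le_sum fun l _ => hmonoQ.monotone ?_
            exact pow_le_pow_left₀ (norm_nonneg _) (hinit _ _ (hadj l).symm) 2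
        _ = _ := by simp
    · intro s hs hVs
      have hs' : s ∈ Set.Ico (0:ℝ) T := ⟨hs.1.le, hs.2.trans ht.2⟩
      have hlong : ∃ l, R' ≤ ‖x (hd l) s - x (tl l) s‖ := by
        by_contra! hcon
        refine absurd hVs (not_lt.2 ?_)
        calc V s ≤ ∑ _l : Fin M, sqPot r (R' ^ 2) := by
              refine Finset.sum_le_sum fun l _ => hmonoQ.monotone ?_
              exact pow_le_pow_left₀ (norm_nonneg _) (hcon l).le 2
          _ = _ := by simp
      have hp := input_power_le hN G tl hd hadj henum hM r hr_mono hr0 R' δ hR'pos hδpos hδ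
        (fun i => x i s) (fun i => v i s) (fun i => hv i s hs') hlong
      have hξ := sum_inner_laplacian G tl hd hadj henum r (fun i => x i s)
        (fun i => ∑ j ∈ G.neighborFinset i, r ‖x i s - x j s‖ • (x i s - x j s))
      simp only [real_inner_self_eq_norm_sq] at hξ
      rw [hξ] at hp
      have hg : ∑ l, r ‖x (hd l) s - x (tl l) s‖ * inner ℝ (x (hd l) s - x (tl l) s)
          (gfun c δ ε 𝔯 h (x (hd l) s) - gfun c δ ε 𝔯 h (x (tl l) s)) ≤ 0 :=
        Finset.sum_nonpos fun l _ => mul_nonpos_of_nonneg_of_nonpos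
          (hr_nonneg _ (norm_nonneg _))
          (gfun_dissipative hε hε𝔯 (by linarith) hδpos.le hh_mono hh_range
            (hlt s hs' _) (hlt s hs' _))
      have hsplit : V' s = ∑ l, r ‖x (hd l) s - x (tl l) s‖ * inner ℝ (x (hd l) s - x (tl l) s)
            (gfun c δ ε 𝔯 h (x (hd l) s) - gfun c δ ε 𝔯 h (x (tl l) s))
          - ∑ l, r ‖x (hd l) s - x (tl l) s‖ * inner ℝ (x (hd l) s - x (tl l) s)
            ((∑ j ∈ G.neighborFinset (hd l), r ‖x (hd l) s - x j s‖ • (x (hd l) s - x j s))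
              - ∑ j ∈ G.neighborFinset (tl l), r ‖x (tl l) s - x j s‖ • (x (tl l) s - x j s))
          + ∑ l, r ‖x (hd l) s - x (tl l) s‖ * inner ℝ (x (hd l) s - x (tl l) s)
            (v (hd l) s - v (tl l) s) := by
        rw [← Finset.sum_sub_distrib, ← Finset.sum_add_distrib]
        refine Finset.sum_congr rfl fun l _ => ?_
        rw [← mul_sub, ← mul_add, ← inner_sub_right, ← inner_add_right]
        congr 2
        simp only [hF]
        abel
      rw [hsplit]
      linarith
  -- a single edge carries at most the total potential
  have hedge : ∀ l, ‖x (hd l) t - x (tl l) t‖ ≤ R := by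
    intro l
    have hR0 : 0 ≤ R := by linarith
    have h1 : sqPot r (‖x (hd l) t - x (tl l) t‖ ^ 2) ≤ V t :=
      Finset.single_le_sum (f := fun l => sqPot r (‖x (hd l) t - x (tl l) t‖ ^ 2))
        (fun l _ => hQ0 ▸ hmonoQ.monotone (sq_nonneg _)) (Finset.mem_univ l)
    rw [Pfun_eq_sqPot hr_cont hR'pos.le, Pfun_eq_sqPot hr_cont hR0] at hP
    exact (pow_le_pow_iff_left₀ (norm_nonneg _) hR0 two_ne_zero).1 (hmonoQ.le_iff_le.1 ((h1.trans hV).trans hP))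
  intro i j hij
  obtain ⟨l, hl, -⟩ := henum s(i, j) hij
  rcases Sym2.eq_iff.1 hl with ⟨h1, h2⟩ | ⟨h1, h2⟩
  · rw [← h1, ← h2, norm_sub_rev]; exact hedge l
  · rw [← h1, ← h2]; exact hedge l
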